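/- Let d ≥ 3 be an integer, r₀, ε > 0, and let v₁(x) := (|x|^{2−d} − (r₀+ε)^{2−d}) / (r₀^{2−d} − (r₀+ε)^{2−d}). Suppose u is continuous on the closed annulus {x ∈ ℝ^d : r₀ ≤ |x| ≤ r₀+ε}, C¹ up to its boundary, harmonic on the open annulus, u ≡ c on the inner sphere {|x| = r₀} for some constant c, the total radial flux of u across the inner sphere vanishes (∫_{{|x|=r₀}} ⟨∇u(x), x/|x|⟩ dσ(x) = 0), and u = φ on the outer sphere {|x| = r₀+ε} for a continuous function φ. Then c = (∫_{{|x|=r₀+ε}} ⟨∇v₁(x), x/|x|⟩ φ(x) dσ(x)) / (∫_{{|x|=r₀}} ⟨∇v₁(x), x/|x|⟩ dσ(x)). -/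

import Mathlib

open MeasureTheory Metric Set
open scoped InnerProductSpace

/-- The Laplacian of `f : ℝ^d → ℝ` at `x`, as the sum of the pure second
partial derivatives in the coordinate directions. -/
noncomputable def laplacian {d : ℕ} (f : EuclideanSpace ℝ (Fin d) → ℝ)
    (x : EuclideanSpace ℝ (Fin d)) : ℝ :=
  ∑ i : Fin d,
    iteratedFDeriv ℝ 2 f x ![EuclideanSpace.single i 1, EuclideanSpace.single i 1]

/-- `f` is harmonic on the open set `U ⊆ ℝ^d`: it is `C²` there and its
Laplacian vanishes on `U`. -/
def HarmonicOnSet {d : ℕ} (f : EuclideanSpace ℝ (Fin d) → ℝ)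
    (U : Set (EuclideanSpace ℝ (Fin d))) : Prop :=
  ContDiffOn ℝ 2 f U ∧ ∀ x ∈ U, laplacian f x = 0

/-!
Rotations preserve surface measure on spheres, so for every infinitesimal rotation `J` and every
`C¹` function `f` the derivative `x ↦ Df(x)(J x)` integrates to zero over a sphere about the
origin; this takes the place of the divergence theorem. Choosing `f(x) = Du(x)(J x)` and summing
over the generators of the rotation group gives the same for the spherical Laplacian of `u`. For
harmonic `u` in dimension `n` it follows that the radial flux `∫_{|x| = t} ∂u/∂ν dσ`, which is
`t ^ (n - 1)` times the derivative of the spherical mean of `u` up to a constant factor, does not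
depend on `t`. Zero flux at the inner sphere therefore makes the spherical means constant, up to
both boundary spheres by continuity, and `c` is the mean of `φ` over the outer sphere. The radial
derivative of `v₁` is constant on each sphere and has the same flux through both, so the quotient
of integrals is that mean as well.
-/

section SurfaceMeasure

theorem hausdorffMeasure_image_lt_top_of_contDiff {V W : Type*}
    [NormedAddCommGroup V] [NormedSpace ℝ V] [FiniteDimensional ℝ V] [MeasurableSpace V]
    [BorelSpace V] [NormedAddCommGroup W] [NormedSpace ℝ W] [MeasurableSpace W] [BorelSpace W]
    {f : V → W} (hf : ContDiff ℝ 1 f) {K : Set V} (hK : IsCompact K) :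
    μH[Module.finrank ℝ V] (f '' K) < ⊤ := by
  obtain ⟨C, hC⟩ :=
    (hf.locallyLipschitz.locallyLipschitzOn (s := K)).exists_lipschitzOnWith_of_compact hK
  refine (hC.hausdorffMeasure_image_le (Nat.cast_nonneg _)).trans_lt (ENNReal.mul_lt_top ?_ ?_)
  · exact ENNReal.rpow_lt_top_of_nonneg (Nat.cast_nonneg _) ENNReal.coe_ne_top
  · exact hK.measure_lt_top

variable {E : Type*} [NormedAddCommGroup E] [InnerProductSpace ℝ E]

/-- The closed hemisphere of the unit sphere centred at `-v`; stereographic projection from `v`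
is regular on it. -/
def closedHemisphere (v : E) : Set E :=
  sphere 0 1 ∩ {x | ⟪v, x⟫_ℝ ≤ 0}

theorem closedHemisphere_subset_image_stereoInvFunAux {v : E} (hv : ‖v‖ = 1) :
    closedHemisphere v ⊆ (fun w : (ℝ ∙ v)ᗮ ↦ stereoInvFunAux v (w : E)) ''
      (stereoToFun v '' closedHemisphere v) := by
  intro x hx
  refine ⟨_, mem_image_of_mem _ hx, ?_⟩
  have hxv : x ≠ v := by
    rintro rfl
    exact absurd hx.2 (by simp [hv])
  exact congrArg Subtype.val (stereo_left_inv hv (x := ⟨x, hx.1⟩) hxv)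

theorem ball_subset_image_orthogonalProjectionOnto_sphere {v : E} (hv : ‖v‖ = 1) :
    ball (0 : (ℝ ∙ v)ᗮ) 1 ⊆ (ℝ ∙ v)ᗮ.orthogonalProjectionOnto '' sphere (0 : E) 1 := by
  intro w hw
  have hw1 : 0 ≤ 1 - ‖w‖ ^ 2 := by
    have : ‖w‖ < 1 := by simpa using hw
    nlinarith [norm_nonneg w]
  have hwv : ⟪(w : E), √(1 - ‖w‖ ^ 2) • v⟫_ℝ = 0 := by
    rw [inner_smul_right, Submodule.mem_orthogonal_singleton_iff_inner_left.mp w.2, mul_zero]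
  refine ⟨w + √(1 - ‖w‖ ^ 2) • v, ?_, ?_⟩
  · rw [mem_sphere_zero_iff_norm, ← sq_eq_sq₀ (norm_nonneg _) zero_le_one, sq,
      norm_add_sq_eq_norm_sq_add_norm_sq_of_inner_eq_zero _ _ hwv, norm_smul, hv, mul_one,
      Real.norm_eq_abs, abs_mul_abs_self, Real.mul_self_sqrt hw1, Submodule.coe_norm]
    ring
  · rw [map_add, map_smul,
      Submodule.orthogonalProjectionOnto_orthogonalComplement_singleton_eq_zero]
    simp

variable [FiniteDimensional ℝ E]

theorem finrank_sub_one_nonneg [Nontrivial E] : 0 ≤ (Module.finrank ℝ E : ℝ) - 1 :=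
  sub_nonneg.2 (Nat.one_le_cast.2 Module.finrank_pos)

theorem finrank_orthogonal_span_singleton_eq_sub_one {v : E} (hv : ‖v‖ = 1) :
    (Module.finrank ℝ (ℝ ∙ v)ᗮ : ℝ) = (Module.finrank ℝ E : ℝ) - 1 := by
  rw [← (ℝ ∙ v).finrank_add_finrank_orthogonal,
    finrank_span_singleton (norm_ne_zero_iff.1 (hv ▸ one_ne_zero))]
  push_cast
  ring

theorem isCompact_closedHemisphere (v : E) : IsCompact (closedHemisphere v) :=
  (isCompact_sphere 0 1).inter_right
    (isClosed_le (continuous_const.inner continuous_id) continuous_const)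

variable [MeasurableSpace E] [BorelSpace E]

/-- The surface measure on hypersurfaces of `E`, encoded as the Hausdorff measure of
codimension one, so that one measure serves all spheres. -/
noncomputable abbrev surfaceMeasure (E : Type*) [NormedAddCommGroup E] [InnerProductSpace ℝ E]
    [MeasurableSpace E] [BorelSpace E] : Measure E :=
  μH[(Module.finrank ℝ E : ℝ) - 1]

theorem surfaceMeasure_closedHemisphere_lt_top {v : E} (hv : ‖v‖ = 1) :
    surfaceMeasure E (closedHemisphere v) < ⊤ := by
  have hproj : ContinuousOn (stereoToFun v) (closedHemisphere v) :=
    continuousOn_stereoToFun.mono fun x hx ↦ by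
      have hx' : ⟪v, x⟫_ℝ ≤ 0 := hx.2
      simpa using (hx'.trans_lt one_pos).ne
  have hinv : ContDiff ℝ 1 (fun w : (ℝ ∙ v)ᗮ ↦ stereoInvFunAux v (w : E)) :=
    contDiff_stereoInvFunAux.comp (ℝ ∙ v)ᗮ.subtypeL.contDiff
  rw [surfaceMeasure, ← finrank_orthogonal_span_singleton_eq_sub_one hv]
  exact (measure_mono (closedHemisphere_subset_image_stereoInvFunAux hv)).trans_lt
    (hausdorffMeasure_image_lt_top_of_contDiff hinv
      ((isCompact_closedHemisphere v).image_of_continuousOn hproj))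

theorem surfaceMeasure_sphere_one_lt_top [Nontrivial E] :
    surfaceMeasure E (sphere 0 1) < ⊤ := by
  obtain ⟨v, hv⟩ := exists_norm_eq E zero_le_one
  have hcover : sphere (0 : E) 1 ⊆ closedHemisphere v ∪ closedHemisphere (-v) := by
    intro x hx
    exact (le_total ⟪v, x⟫_ℝ 0).imp (⟨hx, ·⟩) fun h ↦ ⟨hx, by simpa using h⟩
  exact (measure_mono hcover).trans_lt <| measure_union_lt_top
    (surfaceMeasure_closedHemisphere_lt_top hv)
    (surfaceMeasure_closedHemisphere_lt_top (by simpa using hv))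

theorem surfaceMeasure_sphere_one_pos [Nontrivial E] : 0 < surfaceMeasure E (sphere 0 1) := by
  obtain ⟨v, hv⟩ := exists_norm_eq E zero_le_one
  calc 0 < μH[(Module.finrank ℝ E : ℝ) - 1] (ball (0 : (ℝ ∙ v)ᗮ) 1) := by
        rw [← finrank_orthogonal_span_singleton_eq_sub_one hv]
        exact measure_ball_pos _ _ one_pos
    _ ≤ μH[(Module.finrank ℝ E : ℝ) - 1] ((ℝ ∙ v)ᗮ.orthogonalProjectionOnto '' sphere (0 : E) 1) :=
        measure_mono (ball_subset_image_orthogonalProjectionOnto_sphere hv)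
    _ ≤ surfaceMeasure E (sphere 0 1) :=
        hausdorffMeasure_orthogonalProjectionOnto_le _ _ _ finrank_sub_one_nonneg

end SurfaceMeasure

section HausdorffScaling

variable {E F : Type*} [NormedAddCommGroup E] [NormedSpace ℝ E] [MeasurableSpace E] [BorelSpace E]
  [NormedAddCommGroup F] [NormedSpace ℝ F]

open scoped Pointwise

theorem measureReal_hausdorffMeasure_smul {d c : ℝ} (hd : 0 ≤ d) (hc : c ≠ 0) (s : Set E) :
    (μH[d]).real (c • s) = |c| ^ d * (μH[d]).real s := by
  rw [measureReal_def, Measure.hausdorffMeasure_smul₀ hd hc, ENNReal.smul_def, smul_eq_mul,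
    ENNReal.toReal_mul]
  simp [measureReal_def]

theorem setIntegral_hausdorffMeasure_smul {d c : ℝ} (hd : 0 ≤ d) (hc : c ≠ 0) (s : Set E)
    (f : E → F) :
    ∫ x in c • s, f x ∂μH[d] = |c| ^ d • ∫ x in s, f (c • x) ∂μH[d] := by
  have hemb : MeasurableEmbedding (c • · : E → E) :=
    (Homeomorph.smulOfNeZero c hc).measurableEmbedding
  have hmap : (μH[d] : Measure E) = (‖c‖₊ ^ d) • (μH[d]).map (c • ·) := by
    refine Measure.ext fun t _ ↦ ?_
    rw [Measure.smul_apply, hemb.map_apply, ← Measure.hausdorffMeasure_smul₀ hd hc,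
      preimage_smul₀ hc, smul_inv_smul₀ hc]
  conv_lhs => rw [hmap]
  rw [Measure.restrict_smul, hemb.restrict_map, preimage_smul₀ hc, inv_smul_smul₀ hc,
    integral_smul_nnreal_measure, hemb.integral_map, NNReal.smul_def]
  simp

theorem setAverage_hausdorffMeasure_smul {d c : ℝ} (hd : 0 ≤ d) (hc : c ≠ 0) (s : Set E)
    (f : E → F) :
    ⨍ x in c • s, f x ∂μH[d] = ⨍ x in s, f (c • x) ∂μH[d] := by
  have hpow : |c| ^ d ≠ 0 := (Real.rpow_pos_of_pos (abs_pos.2 hc) d).ne'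
  rw [setAverage_eq, setAverage_eq, setIntegral_hausdorffMeasure_smul hd hc,
    measureReal_hausdorffMeasure_smul hd hc, smul_smul, mul_inv_rev, inv_mul_cancel_right₀ hpow]

end HausdorffScaling

section SphericalMean

open scoped Pointwise

variable {E F : Type*} [NormedAddCommGroup E] [InnerProductSpace ℝ E] [NormedAddCommGroup F]
  [NormedSpace ℝ F]

theorem sphere_zero_eq_smul_sphere_one {r : ℝ} (hr : 0 < r) :
    sphere (0 : E) r = r • sphere (0 : E) 1 := by
  rw [smul_sphere' hr.ne', smul_zero, Real.norm_of_nonneg hr.le, mul_one]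

theorem smul_mem_sphere_zero {r : ℝ} (hr : 0 < r) {x : E} (hx : x ∈ sphere 0 1) :
    r • x ∈ sphere (0 : E) r := by
  rw [sphere_zero_eq_smul_sphere_one hr]
  exact smul_mem_smul_set hx

variable [MeasurableSpace E] [BorelSpace E]

theorem setIntegral_sphere_comp_linearIsometryEquiv (e : E ≃ₗᵢ[ℝ] E) (d r : ℝ) (f : E → F) :
    ∫ x in sphere 0 r, f (e x) ∂μH[d] = ∫ x in sphere 0 r, f x ∂μH[d] := by
  have h := (e.toIsometryEquiv.measurePreserving_hausdorffMeasure d).setIntegral_preimage_emb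
    e.toHomeomorph.measurableEmbedding f (sphere 0 r)
  simpa using h

/-- The average of `u` over the sphere of radius `t` centred at the origin, with respect to
surface measure. It is meant for `0 < t`. -/
noncomputable def sphericalMean (u : E → F) (t : ℝ) : F :=
  ⨍ x in sphere (0 : E) t, u x ∂surfaceMeasure E

theorem sphericalMean_congr {f g : E → F} {t : ℝ} (h : EqOn f g (sphere 0 t)) :
    sphericalMean f t = sphericalMean g t :=
  setAverage_congr_fun isClosed_sphere.measurableSet (.of_forall h)

theorem sphericalMean_const_smul (a t : ℝ) (f : E → F) :
    sphericalMean (fun x ↦ a • f x) t = a • sphericalMean f t := by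
  simp only [sphericalMean, setAverage_eq, integral_smul, smul_comm a]

theorem sphericalMean_norm_rpow_smul_apply_self {t : ℝ} (ht : 0 < t) (p : ℝ) (L : E → E →L[ℝ] F) :
    sphericalMean (fun x ↦ ‖x‖ ^ (p - 1) • L x x) t =
      t ^ p • sphericalMean (fun x ↦ L x (‖x‖⁻¹ • x)) t := by
  rw [← sphericalMean_const_smul]
  refine sphericalMean_congr fun x hx ↦ ?_
  simp only [mem_sphere_zero_iff_norm.1 hx, map_smul, smul_smul, Real.rpow_sub_one ht.ne',
    div_eq_mul_inv]

variable [FiniteDimensional ℝ E]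

theorem surfaceMeasure_sphere_lt_top [Nontrivial E] {r : ℝ} (hr : 0 < r) :
    surfaceMeasure E (sphere 0 r) < ⊤ := by
  rw [sphere_zero_eq_smul_sphere_one hr,
    Measure.hausdorffMeasure_smul₀ finrank_sub_one_nonneg hr.ne']
  exact ENNReal.mul_lt_top ENNReal.coe_lt_top surfaceMeasure_sphere_one_lt_top

theorem surfaceMeasure_real_sphere [Nontrivial E] {r : ℝ} (hr : 0 < r) :
    (surfaceMeasure E).real (sphere 0 r) =
      r ^ ((Module.finrank ℝ E : ℝ) - 1) * (surfaceMeasure E).real (sphere 0 1) := by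
  rw [sphere_zero_eq_smul_sphere_one hr,
    measureReal_hausdorffMeasure_smul finrank_sub_one_nonneg hr.ne', abs_of_pos hr]

theorem surfaceMeasure_real_sphere_one_pos [Nontrivial E] :
    0 < (surfaceMeasure E).real (sphere 0 1) :=
  ENNReal.toReal_pos surfaceMeasure_sphere_one_pos.ne' surfaceMeasure_sphere_one_lt_top.ne

theorem sphericalMean_eq_setAverage_sphere_one [Nontrivial E] {t : ℝ} (ht : 0 < t) (u : E → F) :
    sphericalMean u t = ⨍ x in sphere (0 : E) 1, u (t • x) ∂surfaceMeasure E := by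
  rw [sphericalMean, sphere_zero_eq_smul_sphere_one ht,
    setAverage_hausdorffMeasure_smul finrank_sub_one_nonneg ht.ne']

theorem setIntegral_sphere_eq_smul_sphericalMean [Nontrivial E] {t : ℝ} (ht : 0 < t) (f : E → F) :
    ∫ x in sphere 0 t, f x ∂surfaceMeasure E =
      (t ^ ((Module.finrank ℝ E : ℝ) - 1) * (surfaceMeasure E).real (sphere 0 1)) •
        sphericalMean f t := by
  rw [← measure_smul_setAverage f (surfaceMeasure_sphere_lt_top ht).ne,
    surfaceMeasure_real_sphere ht, sphericalMean]

theorem sphericalMean_const [Nontrivial E] [CompleteSpace F] {t : ℝ} (ht : 0 < t) (c : F) :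
    sphericalMean (fun _ : E ↦ c) t = c := by
  rw [sphericalMean_eq_setAverage_sphere_one ht]
  exact setAverage_const surfaceMeasure_sphere_one_pos.ne' surfaceMeasure_sphere_one_lt_top.ne c

end SphericalMean

section ParametricIntegral

open scoped Topology

variable {X F : Type*} [TopologicalSpace X] [T2Space X] [MeasurableSpace X] [OpensMeasurableSpace X]
  [NormedAddCommGroup F] [NormedSpace ℝ F] {μ : Measure X} {S : Set X}

theorem continuousOn_setIntegral_of_isCompact (hS : IsCompact S) (hμ : μ S ≠ ⊤)
    {T : Type*} [TopologicalSpace T] [FirstCountableTopology T] {K : Set T} (hK : IsCompact K)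
    {f : T → X → F} (hf : ContinuousOn (Function.uncurry f) (K ×ˢ S)) :
    ContinuousOn (fun t ↦ ∫ x in S, f t x ∂μ) K := by
  obtain ⟨C, hC⟩ := (hK.prod hS).exists_bound_of_continuousOn hf
  refine continuousOn_of_dominated (bound := fun _ ↦ C) (fun t ht ↦ ?_) (fun t ht ↦ ?_)
    (integrableOn_const hμ) ?_
  · exact (hf.uncurry_left t ht).aestronglyMeasurable_of_isCompact hS hS.measurableSet
  · filter_upwards [ae_restrict_mem hS.measurableSet] with x hx using hC (t, x) ⟨ht, hx⟩
  · filter_upwards [ae_restrict_mem hS.measurableSet] with x hx using hf.uncurry_right x hx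

theorem hasDerivAt_setIntegral_of_isCompact (hS : IsCompact S) (hμ : μ S ≠ ⊤)
    {f f' : ℝ → X → F} {s : Set ℝ} {t₀ : ℝ} (hs : s ∈ 𝓝 t₀)
    (hf : ∀ t ∈ s, ContinuousOn (f t) S) (hf' : ContinuousOn (Function.uncurry f') (s ×ˢ S))
    (hderiv : ∀ t ∈ s, ∀ x ∈ S, HasDerivAt (f · x) (f' t x) t) :
    HasDerivAt (fun t ↦ ∫ x in S, f t x ∂μ) (∫ x in S, f' t₀ x ∂μ) t₀ := by
  obtain ⟨K, hKs, hKt₀, hK⟩ := LocallyCompactSpace.local_compact_nhds t₀ s hs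
  obtain ⟨C, hC⟩ := (hK.prod hS).exists_bound_of_continuousOn
    (hf'.mono (prod_mono_left hKt₀))
  have hmem := ae_restrict_mem (μ := μ) hS.measurableSet
  refine (hasDerivAt_integral_of_dominated_loc_of_deriv_le (bound := fun _ ↦ C) hKs ?_ ?_ ?_ ?_
    (integrableOn_const hμ) ?_).2
  · filter_upwards [hs] with t ht
    exact (hf t ht).aestronglyMeasurable_of_isCompact hS hS.measurableSet
  · exact (hf t₀ (mem_of_mem_nhds hs)).integrableOn_of_subset_isCompact hS hS.measurableSet
      subset_rfl hμ
  · exact (hf'.uncurry_left t₀ (mem_of_mem_nhds hs)).aestronglyMeasurable_of_isCompact hS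
      hS.measurableSet
  · filter_upwards [hmem] with x hx t ht using hC (t, x) ⟨ht, hx⟩
  · filter_upwards [hmem] with x hx t ht using hderiv t (hKt₀ ht) x hx

end ParametricIntegral

section Rotations

variable {E F : Type*} [NormedAddCommGroup E] [InnerProductSpace ℝ E]
  [NormedAddCommGroup F] [NormedSpace ℝ F]

theorem exp_mem_unitary_of_mem_skewAdjoint [CompleteSpace E] {J : E →L[ℝ] E}
    (hJ : J ∈ skewAdjoint (E →L[ℝ] E)) : NormedSpace.exp J ∈ unitary (E →L[ℝ] E) := by
  let +nondep : NormedAlgebra ℚ (E →L[ℝ] E) := .restrictScalars ℚ ℝ _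
  exact NormedSpace.exp_mem_unitary_of_mem_skewAdjoint hJ

variable [FiniteDimensional ℝ E] [MeasurableSpace E] [BorelSpace E]

theorem setIntegral_sphere_fderiv_skewAdjoint_eq_zero [Nontrivial E] {J : E →L[ℝ] E}
    (hJ : J ∈ skewAdjoint (E →L[ℝ] E)) {r : ℝ} (hr : 0 < r) {f : E → F}
    (hf : ∀ x ∈ sphere 0 r, ContDiffAt ℝ 1 f x) :
    ∫ x in sphere 0 r, fderiv ℝ f x (J x) ∂surfaceMeasure E = 0 := by
  set R : ℝ → E →L[ℝ] E := fun t ↦ NormedSpace.exp (t • J)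
  have hunitary (t : ℝ) : R t ∈ unitary (E →L[ℝ] E) :=
    exp_mem_unitary_of_mem_skewAdjoint (skewAdjoint.smul_mem t hJ)
  have hinv (t : ℝ) : ∫ x in sphere 0 r, f (R t x) ∂surfaceMeasure E =
      ∫ x in sphere 0 r, f x ∂surfaceMeasure E :=
    setIntegral_sphere_comp_linearIsometryEquiv
      (Unitary.linearIsometryEquiv ⟨R t, hunitary t⟩) _ r f
  have hR (t : ℝ) : HasDerivAt R (R t * J) t := hasDerivAt_exp_smul_const J t
  have hR_cont : Continuous R := continuous_iff_continuousAt.2 fun t ↦ (hR t).continuousAt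
  have hmem (t : ℝ) {x : E} (hx : x ∈ sphere 0 r) : R t x ∈ sphere 0 r := by
    simpa [Unitary.norm_map ⟨R t, hunitary t⟩ x] using hx
  have hfderiv : ContinuousOn (fderiv ℝ f) (sphere 0 r) := fun x hx ↦
    ((hf x hx).fderiv_right (m := 0) le_rfl).continuousAt.continuousWithinAt
  have hderiv := hasDerivAt_setIntegral_of_isCompact (μ := surfaceMeasure E)
    (isCompact_sphere (0 : E) r) (surfaceMeasure_sphere_lt_top hr).ne (t₀ := 0) Filter.univ_mem
    (f := fun t x ↦ f (R t x)) (f' := fun t x ↦ fderiv ℝ f (R t x) (R t (J x)))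
    (fun t _ x hx ↦ ((hf _ (hmem t hx)).continuousAt.comp
      (R t).continuous.continuousAt).continuousWithinAt)
    ((hfderiv.comp (by fun_prop) fun p hp ↦ hmem p.1 hp.2).clm_apply (by fun_prop))
    (fun t _ x hx ↦ ((hf _ (hmem t hx)).differentiableAt one_ne_zero).hasFDerivAt.comp_hasDerivAt t
      (by simpa using (hR t).clm_apply (hasDerivAt_const t x)))
  simp only [hinv] at hderiv
  simpa [R] using hderiv.unique (hasDerivAt_const _ _)

end Rotations

section Generators

variable {E F : Type*} [NormedAddCommGroup E] [InnerProductSpace ℝ E]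
  [NormedAddCommGroup F] [NormedSpace ℝ F]

/-- The infinitesimal rotation in the plane spanned by `v` and `w`, turning `v` towards `w`. -/
noncomputable def rotationGenerator (v w : E) : E →L[ℝ] E :=
  (innerSL ℝ v).smulRight w - (innerSL ℝ w).smulRight v

theorem rotationGenerator_apply (v w x : E) :
    rotationGenerator v w x = ⟪v, x⟫_ℝ • w - ⟪w, x⟫_ℝ • v := by
  simp [rotationGenerator]

theorem rotationGenerator_mem_skewAdjoint [CompleteSpace E] (v w : E) :
    rotationGenerator v w ∈ skewAdjoint (E →L[ℝ] E) := by
  rw [skewAdjoint.mem_iff, ContinuousLinearMap.star_eq_adjoint, eq_comm,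
    ContinuousLinearMap.eq_adjoint_iff]
  intro x y
  simp only [neg_apply, rotationGenerator_apply, inner_neg_left, inner_sub_left, inner_sub_right,
    real_inner_smul_left, real_inner_smul_right, real_inner_comm x]
  ring

variable {ι : Type*} [Fintype ι] (b : OrthonormalBasis ι ℝ E)

theorem sum_rotationGenerator_apply_apply (x : E) :
    ∑ i, ∑ j, rotationGenerator (b i) (b j) (rotationGenerator (b i) (b j) x) =
      (2 - 2 * (Fintype.card ι : ℝ)) • x := by
  classical
  have hx : ∑ i, ⟪b i, x⟫_ℝ • b i = x := b.sum_repr' x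
  simp only [rotationGenerator_apply, inner_sub_right, inner_smul_right,
    orthonormal_iff_ite.1 b.orthonormal, mul_ite, mul_one, mul_zero, sub_smul, ite_smul, zero_smul,
    Finset.sum_sub_distrib, Finset.sum_ite_eq, Finset.sum_ite_eq', Finset.mem_univ, if_true, hx,
    Finset.sum_const, Finset.card_univ, ← Finset.smul_sum]
  rw [← Nat.cast_smul_eq_nsmul ℝ]
  module

theorem sum_map_rotationGenerator_map_rotationGenerator (B : E →L[ℝ] E →L[ℝ] F) (x : E) :
    ∑ i, ∑ j, B (rotationGenerator (b i) (b j) x) (rotationGenerator (b i) (b j) x) =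
      (2 * ‖x‖ ^ 2) • ∑ i, B (b i) (b i) - (2 : ℝ) • B x x := by
  have hdiag : ∑ i, ∑ j, ⟪b i, x⟫_ℝ ^ 2 • B (b j) (b j) = ‖x‖ ^ 2 • ∑ i, B (b i) (b i) := by
    rw [← b.sum_sq_inner_right x, Finset.sum_smul]
    simp only [Finset.smul_sum]
  have hcross : ∑ i, ∑ j, (⟪b i, x⟫_ℝ * ⟪b j, x⟫_ℝ) • B (b i) (b j) = B x x := by
    conv_rhs => rw [← b.sum_repr' x]
    simp only [map_sum, map_smul, sum_apply, smul_apply, Finset.smul_sum, smul_smul]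
    rw [Finset.sum_comm]
    simp only [mul_comm]
  have hterm (i j : ι) :
      B (rotationGenerator (b i) (b j) x) (rotationGenerator (b i) (b j) x) =
        (⟪b i, x⟫_ℝ ^ 2 • B (b j) (b j) + ⟪b j, x⟫_ℝ ^ 2 • B (b i) (b i)) -
          ((⟪b i, x⟫_ℝ * ⟪b j, x⟫_ℝ) • B (b i) (b j) +
            (⟪b j, x⟫_ℝ * ⟪b i, x⟫_ℝ) • B (b j) (b i)) := by
    simp only [rotationGenerator_apply, map_sub, map_smul, sub_apply, smul_apply]
    module
  simp only [hterm, Finset.sum_sub_distrib, Finset.sum_add_distrib]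
  rw [Finset.sum_comm (f := fun i j ↦ ⟪b j, x⟫_ℝ ^ 2 • B (b i) (b i)),
    Finset.sum_comm (f := fun i j ↦ (⟪b j, x⟫_ℝ * ⟪b i, x⟫_ℝ) • B (b j) (b i)), hdiag, hcross]
  module

end Generators

section SphericalLaplacian

open scoped Laplacian

variable {E F : Type*} [NormedAddCommGroup E] [InnerProductSpace ℝ E]
  [NormedAddCommGroup F] [NormedSpace ℝ F]

theorem contDiffAt_fderiv_clm_apply_self {u : E → F} {x : E} (hu : ContDiffAt ℝ 2 u x)
    (L : E →L[ℝ] E) : ContDiffAt ℝ 1 (fun y ↦ fderiv ℝ u y (L y)) x :=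
  (hu.fderiv_right (m := 1) le_rfl).clm_apply L.contDiff.contDiffAt

theorem fderiv_fderiv_clm_apply_self {u : E → F} {x : E} (hu : ContDiffAt ℝ 2 u x)
    (L : E →L[ℝ] E) (v : E) :
    fderiv ℝ (fun y ↦ fderiv ℝ u y (L y)) x v =
      fderiv ℝ (fderiv ℝ u) x v (L x) + fderiv ℝ u x (L v) := by
  have hDu : DifferentiableAt ℝ (fderiv ℝ u) x :=
    (hu.fderiv_right (m := 1) le_rfl).differentiableAt one_ne_zero
  rw [fderiv_clm_apply hDu L.differentiableAt]
  simp [add_comm]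

variable [FiniteDimensional ℝ E]

/-- The Laplace-Beltrami operator of the sphere through `x` centred at the origin, applied to `u`
at `x`, normalised by the factor `‖x‖ ^ 2`: the Laplacian minus its radial part. -/
noncomputable def sphericalLaplacian (u : E → F) (x : E) : F :=
  ‖x‖ ^ 2 • (Δ u) x - fderiv ℝ (fderiv ℝ u) x x x -
    ((Module.finrank ℝ E : ℝ) - 1) • fderiv ℝ u x x

theorem sum_fderiv_rotationGenerator_eq_two_smul_sphericalLaplacian {ι : Type*} [Fintype ι]
    (b : OrthonormalBasis ι ℝ E) {u : E → F} {x : E} (hu : ContDiffAt ℝ 2 u x) :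
    ∑ i, ∑ j, fderiv ℝ (fun y ↦ fderiv ℝ u y (rotationGenerator (b i) (b j) y)) x
        (rotationGenerator (b i) (b j) x) = (2 : ℝ) • sphericalLaplacian u x := by
  simp only [fderiv_fderiv_clm_apply_self hu, Finset.sum_add_distrib, ← map_sum]
  rw [sum_map_rotationGenerator_map_rotationGenerator, sum_rotationGenerator_apply_apply,
    sphericalLaplacian, InnerProductSpace.laplacian_eq_iteratedFDeriv_orthonormalBasis u b,
    Module.finrank_eq_card_basis b.toBasis]
  simp only [iteratedFDeriv_two_apply, Matrix.cons_val_zero, Matrix.cons_val_one, map_smul]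
  module

variable [MeasurableSpace E] [BorelSpace E]

theorem setIntegral_sphere_sphericalLaplacian_eq_zero [Nontrivial E] {r : ℝ} (hr : 0 < r)
    {u : E → F} (hu : ∀ x ∈ sphere 0 r, ContDiffAt ℝ 2 u x) :
    ∫ x in sphere 0 r, sphericalLaplacian u x ∂surfaceMeasure E = 0 := by
  set b := stdOrthonormalBasis ℝ E
  set J := fun i j ↦ rotationGenerator (b i) (b j)
  have hS : MeasurableSet (sphere (0 : E) r) := isClosed_sphere.measurableSet
  have hint (i j) : IntegrableOn
      (fun x ↦ fderiv ℝ (fun y ↦ fderiv ℝ u y (J i j y)) x (J i j x)) (sphere 0 r)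
      (surfaceMeasure E) := by
    refine ContinuousOn.integrableOn_of_subset_isCompact (fun x hx ↦ ?_) (isCompact_sphere 0 r) hS
      subset_rfl (surfaceMeasure_sphere_lt_top hr).ne
    exact (((contDiffAt_fderiv_clm_apply_self (hu x hx) (J i j)).fderiv_right
      (m := 0) le_rfl).continuousAt.clm_apply (J i j).continuous.continuousAt).continuousWithinAt
  have hzero := calc
    (2 : ℝ) • ∫ x in sphere 0 r, sphericalLaplacian u x ∂surfaceMeasure E
    _ = ∫ x in sphere 0 r, ∑ i, ∑ j, fderiv ℝ (fun y ↦ fderiv ℝ u y (J i j y)) x (J i j x)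
          ∂surfaceMeasure E := by
      rw [← integral_smul]
      exact setIntegral_congr_fun hS fun x hx ↦
        (sum_fderiv_rotationGenerator_eq_two_smul_sphericalLaplacian b (hu x hx)).symm
    _ = ∑ i, ∑ j, ∫ x in sphere 0 r, fderiv ℝ (fun y ↦ fderiv ℝ u y (J i j y)) x (J i j x)
          ∂surfaceMeasure E := by
      rw [integral_finsetSum _ fun i _ ↦ integrable_finsetSum _ fun j _ ↦ hint i j]
      exact Finset.sum_congr rfl fun i _ ↦ integral_finsetSum _ fun j _ ↦ hint i j
    _ = 0 := Finset.sum_eq_zero fun i _ ↦ Finset.sum_eq_zero fun j _ ↦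
      setIntegral_sphere_fderiv_skewAdjoint_eq_zero (rotationGenerator_mem_skewAdjoint _ _) hr
        fun x hx ↦ contDiffAt_fderiv_clm_apply_self (hu x hx) (J i j)
  exact (smul_eq_zero.1 hzero).resolve_left two_ne_zero

end SphericalLaplacian

section RadialDerivative

open scoped Topology

variable {E F : Type*} [NormedAddCommGroup E] [InnerProductSpace ℝ E]
  [NormedAddCommGroup F] [NormedSpace ℝ F]

theorem fderiv_comp_norm_apply_self {g : ℝ → F} {g' : F} {x : E} (hx : x ≠ 0)
    (hg : HasDerivAt g g' ‖x‖) : fderiv ℝ (fun y ↦ g ‖y‖) x x = ‖x‖ • g' := by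
  have hnorm : DifferentiableAt ℝ (‖·‖) x := (contDiffAt_norm ℝ hx).differentiableAt one_ne_zero
  have hcomp : HasFDerivAt (fun y ↦ g ‖y‖) _ x := hg.hasFDerivAt.comp x hnorm.hasFDerivAt
  simp [hcomp.fderiv, hnorm.fderiv_norm_self]

variable [MeasurableSpace E] [BorelSpace E] [FiniteDimensional ℝ E] [Nontrivial E]

theorem hasDerivAt_sphericalMean {f : E → F} {t : ℝ} (ht : 0 < t)
    (hf : ∀ x ∈ sphere 0 t, ContDiffAt ℝ 1 f x) :
    HasDerivAt (sphericalMean f) (sphericalMean (fun x ↦ fderiv ℝ f x (‖x‖⁻¹ • x)) t) t := by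
  have hsmooth : ∀ᶠ s in 𝓝 t, ∀ x ∈ sphere (0 : E) 1, ContDiffAt ℝ 1 f (s • x) :=
    (isCompact_sphere 0 1).eventually_forall_of_forall_eventually fun x hx ↦
      (continuous_smul.tendsto (t, x)).eventually
        ((hf _ (smul_mem_sphere_zero ht hx)).eventually (by simp))
  have hderiv := hasDerivAt_setIntegral_of_isCompact (μ := surfaceMeasure E)
    (isCompact_sphere (0 : E) 1) surfaceMeasure_sphere_one_lt_top.ne hsmooth
    (f := fun s x ↦ f (s • x)) (f' := fun s x ↦ fderiv ℝ f (s • x) x)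
    (fun s hs x hx ↦ ((hs x hx).continuousAt.comp
      (continuous_const_smul s).continuousAt).continuousWithinAt)
    (fun p hp ↦ ((((hp.1 p.2 hp.2).fderiv_right (m := 0) le_rfl).continuousAt.comp
      (f := fun q : ℝ × E ↦ q.1 • q.2) continuous_smul.continuousAt).clm_apply
        continuous_snd.continuousAt).continuousWithinAt)
    (fun s hs x hx ↦ ((hs x hx).differentiableAt one_ne_zero).hasFDerivAt.comp_hasDerivAt s
      (by simpa using (hasDerivAt_id s).smul_const x))
  have hradial : sphericalMean (fun x ↦ fderiv ℝ f x (‖x‖⁻¹ • x)) t =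
      ⨍ x in sphere 0 1, fderiv ℝ f (t • x) x ∂surfaceMeasure E := by
    rw [sphericalMean_eq_setAverage_sphere_one ht]
    refine setAverage_congr_fun isClosed_sphere.measurableSet (.of_forall fun x hx ↦ ?_)
    simp [mem_sphere_zero_iff_norm.1 (smul_mem_sphere_zero ht hx), inv_smul_smul₀ ht.ne']
  rw [hradial, setAverage_eq]
  refine (hderiv.const_smul _).congr_of_eventuallyEq ?_
  filter_upwards [lt_mem_nhds ht] with s hs
  rw [sphericalMean_eq_setAverage_sphere_one hs, setAverage_eq]
  rfl

theorem continuousOn_sphericalMean {f : E → F} {a b : ℝ} (ha : 0 < a)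
    (hf : ContinuousOn f (norm ⁻¹' Icc a b)) : ContinuousOn (sphericalMean f) (Icc a b) := by
  have hf' : ContinuousOn (fun p : ℝ × E ↦ f (p.1 • p.2)) (Icc a b ×ˢ sphere 0 1) := by
    refine hf.comp (by fun_prop) fun p hp ↦ ?_
    rw [mem_preimage, mem_sphere_zero_iff_norm.1 (smul_mem_sphere_zero (ha.trans_le hp.1.1) hp.2)]
    exact hp.1
  refine ((continuousOn_setIntegral_of_isCompact (isCompact_sphere (0 : E) 1)
    surfaceMeasure_sphere_one_lt_top.ne isCompact_Icc
    (f := fun s x ↦ f (s • x)) hf').const_smul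
      ((surfaceMeasure E).real (sphere 0 1))⁻¹).congr fun t ht ↦ ?_
  rw [sphericalMean_eq_setAverage_sphere_one (ha.trans_le ht.1), setAverage_eq]
  rfl

end RadialDerivative

section FluxConservation

open scoped Laplacian

theorem uniqueDiffOn_norm_preimage_Ico {E : Type*} [NormedAddCommGroup E] [NormedSpace ℝ E]
    {r : ℝ} (hr : 0 < r) (R : ℝ) : UniqueDiffOn ℝ (norm ⁻¹' Ico r R : Set E) := by
  have hexterior : UniqueDiffOn ℝ (norm ⁻¹' Ici r : Set E) := by
    intro x (hx : r ≤ ‖x‖)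
    have hx0 : ‖x‖ ≠ 0 := (hr.trans_le hx).ne'
    -- `x` lies on the boundary of a ball contained in the exterior domain
    have hsub : closedBall ((2 : ℝ) • x) ‖x‖ ⊆ norm ⁻¹' Ici r := by
      intro y hy
      have hy' : ‖(2 : ℝ) • x - y‖ ≤ ‖x‖ := by rwa [← mem_closedBall_iff_norm']
      have htri := norm_sub_norm_le ((2 : ℝ) • x) y
      rw [norm_smul, Real.norm_two] at htri
      exact mem_preimage.2 (mem_Ici.2 (by linarith))
    refine (uniqueDiffWithinAt_convex (convex_closedBall _ _) ?_ (subset_closure ?_)).mono hsub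
    · rw [interior_closedBall _ hx0]
      exact nonempty_ball.2 (hr.trans_le hx)
    · rw [mem_closedBall_iff_norm', two_smul, add_sub_cancel_right]
  rw [← Ici_inter_Iio, preimage_inter]
  exact hexterior.inter (isOpen_Iio.preimage continuous_norm)

theorem fderivWithin_norm_preimage_Ico_eq_fderiv {E F : Type*} [NormedAddCommGroup E]
    [NormedSpace ℝ E] [NormedAddCommGroup F] [NormedSpace ℝ F] {u : E → F} {r R : ℝ} {x : E}
    (hx : ‖x‖ ∈ Ioo r R) : fderivWithin ℝ u (norm ⁻¹' Ico r R) x = fderiv ℝ u x :=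
  fderivWithin_of_mem_nhds (continuous_norm.continuousAt (Ico_mem_nhds hx.1 hx.2))

theorem fderivWithin_norm_preimage_Icc_eq_Ico {E F : Type*} [NormedAddCommGroup E]
    [NormedSpace ℝ E] [NormedAddCommGroup F] [NormedSpace ℝ F] {u : E → F} {r R : ℝ} {x : E}
    (hx : ‖x‖ < R) :
    fderivWithin ℝ u (norm ⁻¹' Icc r R) x = fderivWithin ℝ u (norm ⁻¹' Ico r R) x := by
  have hIco : (norm ⁻¹' Ico r R : Set E) = norm ⁻¹' Icc r R ∩ norm ⁻¹' Iio R := by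
    ext y
    simp only [mem_inter_iff, mem_preimage, mem_Ico, mem_Icc, mem_Iio]
    grind
  rw [hIco, fderivWithin_inter (continuous_norm.continuousAt (Iio_mem_nhds hx))]

variable {E F : Type*} [NormedAddCommGroup E] [InnerProductSpace ℝ E] [FiniteDimensional ℝ E]
  [NormedAddCommGroup F] [NormedSpace ℝ F]

theorem fderiv_norm_rpow_smul_fderiv_apply_self {u : E → F} {x : E} (hx : x ≠ 0)
    (hu : ContDiffAt ℝ 2 u x) :
    fderiv ℝ (fun y ↦ ‖y‖ ^ ((Module.finrank ℝ E : ℝ) - 2) • fderiv ℝ u y y) x x =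
      ‖x‖ ^ ((Module.finrank ℝ E : ℝ) - 2) • (‖x‖ ^ 2 • (Δ u) x - sphericalLaplacian u x) := by
  set p : ℝ := (Module.finrank ℝ E : ℝ) - 2
  have hx' : ‖x‖ ≠ 0 := norm_ne_zero_iff.2 hx
  have hpow : DifferentiableAt ℝ (fun y : E ↦ ‖y‖ ^ p) x :=
    ((contDiffAt_norm ℝ hx).differentiableAt one_ne_zero).rpow_const (.inl hx')
  have heuler : fderiv ℝ (fun y : E ↦ ‖y‖ ^ p) x x = p * ‖x‖ ^ p := by
    rw [fderiv_comp_norm_apply_self hx (Real.hasDerivAt_rpow_const (.inl hx')),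
      Real.rpow_sub_one hx', smul_eq_mul]
    field_simp
  have hDu : DifferentiableAt ℝ (fun y ↦ fderiv ℝ u y y) x :=
    (contDiffAt_fderiv_clm_apply_self hu (.id ℝ E)).differentiableAt one_ne_zero
  have hD2u := fderiv_fderiv_clm_apply_self hu (.id ℝ E) x
  simp only [ContinuousLinearMap.id_apply] at hD2u
  rw [fderiv_fun_smul hpow hDu]
  simp only [add_apply, smul_apply, ContinuousLinearMap.smulRight_apply, heuler, hD2u,
    sphericalLaplacian]
  module

variable [MeasurableSpace E] [BorelSpace E]

theorem hasDerivAt_sphericalMean_norm_rpow_smul_fderiv_of_harmonicOnNhd [Nontrivial E]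
    {u : E → F} {t : ℝ} (ht : 0 < t)
    (hu : InnerProductSpace.HarmonicOnNhd u (sphere 0 t)) :
    HasDerivAt (sphericalMean fun x ↦ ‖x‖ ^ ((Module.finrank ℝ E : ℝ) - 2) • fderiv ℝ u x x)
      0 t := by
  set p : ℝ := (Module.finrank ℝ E : ℝ) - 2
  have hne {x : E} (hx : x ∈ sphere 0 t) : x ≠ 0 := ne_of_mem_sphere hx ht.ne'
  have hsmooth : ∀ x ∈ sphere 0 t, ContDiffAt ℝ 1 (fun y ↦ ‖y‖ ^ p • fderiv ℝ u y y) x :=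
    fun x hx ↦ ((contDiffAt_norm ℝ (hne hx)).rpow_const_of_ne (norm_ne_zero_iff.2 (hne hx))).smul
      (contDiffAt_fderiv_clm_apply_self (hu x hx).1 (.id ℝ E))
  have hradial : EqOn (fun x ↦ fderiv ℝ (fun y ↦ ‖y‖ ^ p • fderiv ℝ u y y) x (‖x‖⁻¹ • x))
      (fun x ↦ (-(t⁻¹ * t ^ p)) • sphericalLaplacian u x) (sphere 0 t) := fun x hx ↦ by
    simp only [map_smul, fderiv_norm_rpow_smul_fderiv_apply_self (hne hx) (hu x hx).1,
      (hu x hx).2.self_of_nhds, Pi.zero_apply, smul_zero, zero_sub, p,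
      mem_sphere_zero_iff_norm.1 hx]
    module
  refine (hasDerivAt_sphericalMean ht hsmooth).congr_deriv ?_
  rw [sphericalMean_congr hradial, sphericalMean_const_smul, sphericalMean, setAverage_eq,
    setIntegral_sphere_sphericalLaplacian_eq_zero ht fun x hx ↦ (hu x hx).1, smul_zero, smul_zero]

variable [CompleteSpace F]

theorem eq_of_continuousOn_of_hasDerivAt_eq_zero {f : ℝ → F} {a b : ℝ} (hab : a ≤ b)
    (hcont : ContinuousOn f (Icc a b)) (hderiv : ∀ t ∈ Ioo a b, HasDerivAt f 0 t) : f b = f a := by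
  simpa [sub_eq_zero, eq_comm] using
    intervalIntegral.integral_eq_sub_of_hasDerivAt_of_le hab hcont hderiv (by simp)

variable [Nontrivial E] {u : E → F} {r R : ℝ}

theorem setIntegral_sphere_fderivWithin_eq_of_harmonicOnNhd (hr : 0 < r)
    (hu : ContDiffOn ℝ 1 u (norm ⁻¹' Ico r R))
    (hharm : InnerProductSpace.HarmonicOnNhd u (norm ⁻¹' Ioo r R)) {t : ℝ} (ht : t ∈ Ico r R) :
    ∫ x in sphere 0 t, fderivWithin ℝ u (norm ⁻¹' Ico r R) x (‖x‖⁻¹ • x) ∂surfaceMeasure E =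
      ∫ x in sphere 0 r, fderivWithin ℝ u (norm ⁻¹' Ico r R) x (‖x‖⁻¹ • x) ∂surfaceMeasure E := by
  have ht0 : 0 < t := hr.trans_le ht.1
  rw [setIntegral_sphere_eq_smul_sphericalMean ht0, setIntegral_sphere_eq_smul_sphericalMean hr,
    mul_comm, mul_comm (r ^ _), mul_smul, mul_smul, ← sphericalMean_norm_rpow_smul_apply_self ht0,
    ← sphericalMean_norm_rpow_smul_apply_self hr]
  congr 1
  refine eq_of_continuousOn_of_hasDerivAt_eq_zero ht.1 ?_ fun s hs ↦ ?_
  · have hIcc : (norm ⁻¹' Icc r t : Set E) ⊆ norm ⁻¹' Ico r R :=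
      preimage_mono (Icc_subset_Ico_right ht.2)
    refine continuousOn_sphericalMean hr (.smul (.rpow_const (by fun_prop) fun x hx ↦ ?_) ?_)
    · exact .inl (hr.trans_le hx.1).ne'
    · exact ((hu.continuousOn_fderivWithin (uniqueDiffOn_norm_preimage_Ico hr R) le_rfl).mono
        hIcc).clm_apply continuousOn_id
  · have hs' : s ∈ Ioo r R := ⟨hs.1, hs.2.trans ht.2⟩
    have hsphere {q : ℝ} (hq : q ∈ Ioo r R) {x : E} (hx : x ∈ sphere 0 q) : ‖x‖ ∈ Ioo r R :=
      mem_sphere_zero_iff_norm.1 hx ▸ hq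
    refine (hasDerivAt_sphericalMean_norm_rpow_smul_fderiv_of_harmonicOnNhd (hr.trans hs.1)
      (hharm.mono fun x hx ↦ hsphere hs' hx)).congr_of_eventuallyEq ?_
    filter_upwards [isOpen_Ioo.mem_nhds hs'] with q hq
    refine sphericalMean_congr fun x hx ↦ ?_
    simp only [fderivWithin_norm_preimage_Ico_eq_fderiv (hsphere hq hx), sub_sub,
      one_add_one_eq_two]

theorem sphericalMean_eq_of_harmonicOnNhd (hr : 0 < r) (hrR : r < R)
    (hcont : ContinuousOn u (norm ⁻¹' Icc r R))
    (hu : ContDiffOn ℝ 1 u (norm ⁻¹' Ico r R))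
    (hharm : InnerProductSpace.HarmonicOnNhd u (norm ⁻¹' Ioo r R))
    (hflux : ∫ x in sphere 0 r, fderivWithin ℝ u (norm ⁻¹' Icc r R) x (‖x‖⁻¹ • x)
      ∂surfaceMeasure E = 0) :
    sphericalMean u R = sphericalMean u r := by
  refine eq_of_continuousOn_of_hasDerivAt_eq_zero hrR.le (continuousOn_sphericalMean hr hcont)
    fun t ht ↦ ?_
  have ht0 : 0 < t := hr.trans ht.1
  have hsphere {x : E} (hx : x ∈ sphere 0 t) : ‖x‖ ∈ Ioo r R := mem_sphere_zero_iff_norm.1 hx ▸ ht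
  have hflux' : ∫ x in sphere 0 t, fderiv ℝ u x (‖x‖⁻¹ • x) ∂surfaceMeasure E = 0 := calc
    _ = ∫ x in sphere 0 t, fderivWithin ℝ u (norm ⁻¹' Ico r R) x (‖x‖⁻¹ • x)
          ∂surfaceMeasure E := setIntegral_congr_fun isClosed_sphere.measurableSet fun x hx ↦ by
      simp only [fderivWithin_norm_preimage_Ico_eq_fderiv (hsphere hx)]
    _ = ∫ x in sphere 0 r, fderivWithin ℝ u (norm ⁻¹' Ico r R) x (‖x‖⁻¹ • x)
          ∂surfaceMeasure E :=
      setIntegral_sphere_fderivWithin_eq_of_harmonicOnNhd hr hu hharm (Ioo_subset_Ico_self ht)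
    _ = ∫ x in sphere 0 r, fderivWithin ℝ u (norm ⁻¹' Icc r R) x (‖x‖⁻¹ • x)
          ∂surfaceMeasure E := setIntegral_congr_fun isClosed_sphere.measurableSet fun x hx ↦ by
      simp only [fderivWithin_norm_preimage_Icc_eq_Ico
        ((mem_sphere_zero_iff_norm.1 hx).trans_lt hrR)]
    _ = 0 := hflux
  have hzero : sphericalMean (fun x ↦ fderiv ℝ u x (‖x‖⁻¹ • x)) t = 0 := by
    rw [sphericalMean, setAverage_eq, hflux', smul_zero]
  rw [← hzero]
  exact hasDerivAt_sphericalMean ht0 fun x hx ↦ (hharm x (hsphere hx)).1.of_le one_le_two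

end FluxConservation

section FreeConstant

variable {E : Type*} [NormedAddCommGroup E] [InnerProductSpace ℝ E] [FiniteDimensional ℝ E]

theorem inner_gradient_comp_norm_unit_self {g : ℝ → ℝ} {g' : ℝ} {x : E} (hx : x ≠ 0)
    (hg : HasDerivAt g g' ‖x‖) : ⟪gradient (fun y ↦ g ‖y‖) x, ‖x‖⁻¹ • x⟫_ℝ = g' := by
  rw [gradient, InnerProductSpace.toDual_symm_apply, map_smul, fderiv_comp_norm_apply_self hx hg,
    inv_smul_smul₀ (norm_ne_zero_iff.2 hx)]

variable [MeasurableSpace E] [BorelSpace E] [Nontrivial E]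

theorem setIntegral_sphere_inner_gradient_norm_rpow_mul {t : ℝ} (ht : 0 < t) (a D : ℝ)
    (f : E → ℝ) :
    ∫ x in sphere 0 t,
        ⟪gradient (fun y : E ↦ (‖y‖ ^ (2 - (Module.finrank ℝ E : ℝ)) - a) / D) x, ‖x‖⁻¹ • x⟫_ℝ *
          f x ∂surfaceMeasure E =
      (2 - (Module.finrank ℝ E : ℝ)) / D * (surfaceMeasure E).real (sphere 0 1) *
        sphericalMean f t := by
  set p : ℝ := 2 - (Module.finrank ℝ E : ℝ)
  have hderiv : EqOn
      (fun x ↦ ⟪gradient (fun y : E ↦ (‖y‖ ^ p - a) / D) x, ‖x‖⁻¹ • x⟫_ℝ * f x)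
      (fun x ↦ (p * t ^ (p - 1) / D) • f x) (sphere 0 t) := fun x hx ↦ by
    have hx0 : x ≠ 0 := ne_of_mem_sphere hx ht.ne'
    have hgrad : ⟪gradient (fun y : E ↦ (‖y‖ ^ p - a) / D) x, ‖x‖⁻¹ • x⟫_ℝ =
        p * ‖x‖ ^ (p - 1) / D :=
      inner_gradient_comp_norm_unit_self hx0 (((Real.hasDerivAt_rpow_const
        (.inl (norm_ne_zero_iff.2 hx0))).sub_const a).div_const D)
    simp only [hgrad, smul_eq_mul]
    rw [mem_sphere_zero_iff_norm.1 hx]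
  have hpow : t ^ (p - 1) * t ^ ((Module.finrank ℝ E : ℝ) - 1) = 1 := by
    rw [← Real.rpow_add ht, show p - 1 + ((Module.finrank ℝ E : ℝ) - 1) = 0 by ring,
      Real.rpow_zero]
  rw [setIntegral_congr_fun isClosed_sphere.measurableSet hderiv, integral_smul,
    setIntegral_sphere_eq_smul_sphericalMean ht, smul_eq_mul, smul_eq_mul]
  linear_combination
    p / D * (surfaceMeasure E).real (sphere 0 1) * sphericalMean f t * hpow

theorem perfect_conductivity_free_constant_general {d : ℕ} (hd : Module.finrank ℝ E = d)
    (hd2 : d ≠ 2) {r R : ℝ} (hr : 0 < r) (hrR : r < R) {u φ : E → ℝ} {c : ℝ}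
    (hcont : ContinuousOn u {x | r ≤ ‖x‖ ∧ ‖x‖ ≤ R})
    (hC1 : ContDiffOn ℝ 1 u {x | r ≤ ‖x‖ ∧ ‖x‖ < R})
    (hharm : InnerProductSpace.HarmonicOnNhd u {x | r < ‖x‖ ∧ ‖x‖ < R})
    (hinner : ∀ x : E, ‖x‖ = r → u x = c)
    (hflux : ∫ x in sphere 0 r, fderivWithin ℝ u {y | r ≤ ‖y‖ ∧ ‖y‖ ≤ R} x (‖x‖⁻¹ • x)
      ∂μH[(d : ℝ) - 1] = 0)
    (houter : ∀ x : E, ‖x‖ = R → u x = φ x) :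
    let v₁ : E → ℝ := fun x ↦
      (‖x‖ ^ ((2 : ℝ) - d) - R ^ ((2 : ℝ) - d)) / (r ^ ((2 : ℝ) - d) - R ^ ((2 : ℝ) - d))
    c = (∫ x in sphere 0 R, ⟪gradient v₁ x, ‖x‖⁻¹ • x⟫_ℝ * φ x ∂μH[(d : ℝ) - 1]) /
      ∫ x in sphere 0 r, ⟪gradient v₁ x, ‖x‖⁻¹ • x⟫_ℝ ∂μH[(d : ℝ) - 1] := by
  subst hd
  intro v₁
  have hR : 0 < R := hr.trans hrR
  have hp : 2 - (Module.finrank ℝ E : ℝ) ≠ 0 := sub_ne_zero.2 (mod_cast hd2.symm)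
  have hD : r ^ (2 - (Module.finrank ℝ E : ℝ)) - R ^ (2 - (Module.finrank ℝ E : ℝ)) ≠ 0 :=
    sub_ne_zero.2 fun h ↦ hrR.ne ((Real.rpow_left_inj hr.le hR.le hp).1 h)
  have hmean : sphericalMean φ R = c := calc
    sphericalMean φ R = sphericalMean u R :=
      sphericalMean_congr fun x hx ↦ (houter x (mem_sphere_zero_iff_norm.1 hx)).symm
    _ = sphericalMean u r :=
      sphericalMean_eq_of_harmonicOnNhd hr hrR hcont hC1 hharm hflux
    _ = sphericalMean (fun _ : E ↦ c) r :=
      sphericalMean_congr fun x hx ↦ hinner x (mem_sphere_zero_iff_norm.1 hx)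
    _ = c := sphericalMean_const hr c
  have hden : ∫ x in sphere 0 r, ⟪gradient v₁ x, ‖x‖⁻¹ • x⟫_ℝ ∂surfaceMeasure E =
      (2 - (Module.finrank ℝ E : ℝ)) /
          (r ^ (2 - (Module.finrank ℝ E : ℝ)) - R ^ (2 - (Module.finrank ℝ E : ℝ))) *
        (surfaceMeasure E).real (sphere 0 1) := by
    simpa [sphericalMean_const hr] using
      setIntegral_sphere_inner_gradient_norm_rpow_mul hr _ _ fun _ : E ↦ 1
  rw [setIntegral_sphere_inner_gradient_norm_rpow_mul hR, hmean, hden, mul_div_cancel_left₀]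
  exact mul_ne_zero (div_ne_zero hp hD) surfaceMeasure_real_sphere_one_pos.ne'

end FreeConstant

theorem HarmonicOnSet.harmonicOnNhd {d : ℕ} {f : EuclideanSpace ℝ (Fin d) → ℝ}
    {U : Set (EuclideanSpace ℝ (Fin d))} (hf : HarmonicOnSet f U) (hU : IsOpen U) :
    InnerProductSpace.HarmonicOnNhd f U := by
  intro x hx
  refine ⟨hf.1.contDiffAt (hU.mem_nhds hx), ?_⟩
  filter_upwards [hU.mem_nhds hx] with y hy
  rw [InnerProductSpace.laplacian_eq_iteratedFDeriv_orthonormalBasis f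
    (EuclideanSpace.basisFun (Fin d) ℝ)]
  simpa [laplacian] using hf.2 y hy

theorem perfect_conductivity_free_constant {d : ℕ} (hd : 3 ≤ d)
    {r₀ ε : ℝ} (hr₀ : 0 < r₀) (hε : 0 < ε)
    (u φ : EuclideanSpace ℝ (Fin d) → ℝ) (c : ℝ)
    (hcont : ContinuousOn u {x | r₀ ≤ ‖x‖ ∧ ‖x‖ ≤ r₀ + ε})
    (hC1 : ContDiffOn ℝ 1 u {x | r₀ ≤ ‖x‖ ∧ ‖x‖ ≤ r₀ + ε})
    (hharm : HarmonicOnSet u {x | r₀ < ‖x‖ ∧ ‖x‖ < r₀ + ε})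
    (hinner : ∀ x : EuclideanSpace ℝ (Fin d), ‖x‖ = r₀ → u x = c)
    (hflux : (∫ x in Metric.sphere (0 : EuclideanSpace ℝ (Fin d)) r₀,
      fderivWithin ℝ u {y | r₀ ≤ ‖y‖ ∧ ‖y‖ ≤ r₀ + ε} x (‖x‖⁻¹ • x) ∂μH[(d : ℝ) - 1]) = 0)
    (hφ : ContinuousOn φ (Metric.sphere (0 : EuclideanSpace ℝ (Fin d)) (r₀ + ε)))
    (houter : ∀ x : EuclideanSpace ℝ (Fin d), ‖x‖ = r₀ + ε → u x = φ x) :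
    let v₁ : EuclideanSpace ℝ (Fin d) → ℝ := fun x =>
      (‖x‖ ^ ((2 : ℝ) - (d : ℝ)) - (r₀ + ε) ^ ((2 : ℝ) - (d : ℝ)))
        / (r₀ ^ ((2 : ℝ) - (d : ℝ)) - (r₀ + ε) ^ ((2 : ℝ) - (d : ℝ)))
    c = (∫ x in Metric.sphere (0 : EuclideanSpace ℝ (Fin d)) (r₀ + ε),
          ⟪gradient v₁ x, ‖x‖⁻¹ • x⟫_ℝ * φ x ∂μH[(d : ℝ) - 1])
        / (∫ x in Metric.sphere (0 : EuclideanSpace ℝ (Fin d)) r₀,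
          ⟪gradient v₁ x, ‖x‖⁻¹ • x⟫_ℝ ∂μH[(d : ℝ) - 1]) := by
  have : Nontrivial (EuclideanSpace ℝ (Fin d)) :=
    Module.nontrivial_of_finrank_pos (R := ℝ) (by rw [finrank_euclideanSpace_fin]; lia)
  exact perfect_conductivity_free_constant_general finrank_euclideanSpace_fin (by lia) hr₀
    (lt_add_of_pos_right r₀ hε) hcont (hC1.mono fun x hx ↦ ⟨hx.1, hx.2.le⟩)
    (hharm.harmonicOnNhd (isOpen_Ioo.preimage continuous_norm)) hinner hflux houter
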